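/- arXiv:1604.04420 — 6 statements merged into one kernel-verified Lean document; each statement's English description precedes it below -/
import Mathlib

section
/- Let $G,\widehat G,R,U$ be $m\times m$ real matrices such that $U-I$ is invertible, the series $W=\sum_{j=0}^{\infty}G^{j}(U-I)^{-1}R^{j}$ converges (i.e. the family $j\mapsto G^{j}(U-I)^{-1}R^{j}$ has sum $W$), and $WR=\widehat G W$. Then the matrices $W$ and $G\widehat G-I$ are both invertible and $W^{-1}=(I-U)(G\widehat G-I)$. -/
/-!
Splitting off the term `j = 0` of the series gives the Stein equation `W = (U - 1)⁻¹ + G W R`.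
Replacing `W R` by `Ĝ W` moves `W` to the right of every factor: `(1 - G Ĝ) W = (U - 1)⁻¹`.
The right-hand side is a unit, so in a ring where one-sided inverses are two-sided both factors on
the left are units, and solving for `W⁻¹` gives `(U - 1)(1 - G Ĝ) = (1 - U)(G Ĝ - 1)`.
-/

open Matrix

theorem eq_add_mul_mul_of_hasSum_pow_mul_mul_pow {A : Type*} [Semiring A] [TopologicalSpace A]
    [IsTopologicalSemiring A] [T2Space A] {a b x s : A}
    (hs : HasSum (fun j : ℕ => a ^ j * x * b ^ j) s) : s = x + a * s * b := by
  have tail : HasSum (fun j : ℕ => a ^ (j + 1) * x * b ^ (j + 1)) (a * s * b) := by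
    simpa only [pow_succ' a, pow_succ b, mul_assoc] using (hs.mul_left a).mul_right b
  have split : HasSum (fun j : ℕ => a ^ j * x * b ^ j) (x + a * s * b) := by
    simpa only [pow_zero, one_mul, mul_one] using
      HasSum.zero_add (f := fun j : ℕ => a ^ j * x * b ^ j) tail
  exact hs.unique split

theorem one_sub_mul_mul_eq_of_eq_add_mul_mul {A : Type*} [Ring A] {a b c x s : A}
    (hs : s = x + a * s * b) (hsb : s * b = c * s) : (1 - a * c) * s = x := by
  calc (1 - a * c) * s = s - a * (s * b) := by rw [sub_mul, one_mul, mul_assoc, hsb]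
    _ = x := sub_eq_of_eq_add (by rwa [← mul_assoc])

theorem poisson_qbd_W_invertible_general {A : Type*} [Ring A] [IsDedekindFiniteMonoid A]
    [TopologicalSpace A] [IsTopologicalSemiring A] [T2Space A] {G Ghat R U W : A}
    (hU : IsUnit (U - 1))
    (hW : HasSum (fun j : ℕ => G ^ j * Ring.inverse (U - 1) * R ^ j) W)
    (hWR : W * R = Ghat * W) :
    IsUnit W ∧ IsUnit (G * Ghat - 1) ∧ Ring.inverse W = (1 - U) * (G * Ghat - 1) := by
  have factorization : (1 - G * Ghat) * W = Ring.inverse (U - 1) :=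
    one_sub_mul_mul_eq_of_eq_add_mul_mul (eq_add_mul_mul_of_hasSum_pow_mul_mul_pow hW) hWR
  obtain ⟨isUnit_one_sub, isUnit_W⟩ : IsUnit (1 - G * Ghat) ∧ IsUnit W :=
    IsUnit.mul_iff.mp (factorization ▸ hU.ringInverse)
  have one_sub_eq : 1 - G * Ghat = Ring.inverse (U - 1) * Ring.inverse W :=
    (Ring.eq_mul_inverse_iff_mul_eq _ _ _ isUnit_W).mpr factorization
  refine ⟨isUnit_W, IsUnit.sub_iff.mp isUnit_one_sub, ?_⟩
  calc Ring.inverse W = (U - 1) * (1 - G * Ghat) :=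
        (Ring.inverse_mul_eq_iff_eq_mul _ _ _ hU).mp one_sub_eq.symm
    _ = (1 - U) * (G * Ghat - 1) := by rw [← neg_mul_neg, neg_sub, neg_sub]

/-- Lemma 2.2 (Lemma `LemmaInVDbl`): if `U - I` is invertible, the series
`W = ∑_{j≥0} G^j (U - I)⁻¹ R^j` converges and `W R = Ĝ W`, then `W` and
`G Ĝ - I` are invertible and `W⁻¹ = (I - U)(G Ĝ - I)`. -/
theorem poisson_qbd_W_invertible {m : ℕ}
    (G Ghat R U W : Matrix (Fin m) (Fin m) ℝ)
    (hU : IsUnit (U - 1))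
    (hW : HasSum (fun j : ℕ => G ^ j * (U - 1)⁻¹ * R ^ j) W)
    (hWR : W * R = Ghat * W) :
    IsUnit W ∧ IsUnit (G * Ghat - 1) ∧ W⁻¹ = (1 - U) * (G * Ghat - 1) := by
  simp only [nonsing_inv_eq_ringInverse] at hW ⊢
  exact poisson_qbd_W_invertible_general hU hW hWR
end

section
/- Let $A_1,G,\widehat G,R,U$ be $m\times m$ real matrices such that $U-I$ is invertible, $R=A_{1}(I-U)^{-1}$, the series $W=\sum_{j=0}^{\infty}G^{j}(U-I)^{-1}R^{j}$ converges, and $WR=\widehat G W$. Then $W A_{1}(G\widehat G-I)=\widehat G$. -/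
open Matrix
open scoped Ring

/-!
Splitting off the term `j = 0` of the series gives the Stein equation `W = (U - I)⁻¹ + G W R`.
Substituting `W R = Ĝ W` turns it into `(I - G Ĝ) W = (U - I)⁻¹`, so `W (U - I)` is a right inverse
of `I - G Ĝ`, hence a two-sided one because the matrix ring is Dedekind-finite.
Since `A₁ = R (I - U)`, we get
`W A₁ (G Ĝ - I) = W R (U - I) (I - G Ĝ) = Ĝ W (U - I) (I - G Ĝ) = Ĝ`.
-/

theorem eq_add_mul_mul_of_hasSum {α : Type*} [Semiring α] [TopologicalSpace α]
    [IsTopologicalSemiring α] [T2Space α] {G X R W : α}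
    (hW : HasSum (fun j : ℕ => G ^ j * X * R ^ j) W) :
    W = X + G * W * R := by
  have shifted : HasSum (fun j : ℕ => G ^ (j + 1) * X * R ^ (j + 1)) (G * W * R) := by
    simpa only [pow_succ' G, pow_succ R, mul_assoc] using (hW.mul_left G).mul_right R
  simpa only [pow_zero, one_mul, mul_one] using hW.unique shifted.zero_add

theorem one_sub_mul_mul_eq_of_eq_add_mul_mul_s1 {α : Type*} [Ring α] {G Ghat X R W : α}
    (hW : W = X + G * W * R) (hWR : W * R = Ghat * W) : (1 - G * Ghat) * W = X := by
  rw [sub_mul, one_mul, mul_assoc, ← hWR, ← mul_assoc, sub_eq_iff_eq_add]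
  exact hW

theorem mul_mul_eq_one_of_mul_eq_inverse {α : Type*} [MonoidWithZero α] [IsDedekindFiniteMonoid α]
    {a b u : α} (hu : IsUnit u) (h : a * b = u⁻¹ʳ) : b * u * a = 1 := by
  refine mul_eq_one_symm ?_
  rw [← mul_assoc, h, Ring.inverse_mul_cancel u hu]

theorem poisson_qbd_W_A1_general {α : Type*} [Ring α] [IsDedekindFiniteMonoid α]
    [TopologicalSpace α] [IsTopologicalSemiring α] [T2Space α]
    {A1 G Ghat R U W : α}
    (hU : IsUnit (U - 1))
    (hR : R = A1 * (1 - U)⁻¹ʳ)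
    (hW : HasSum (fun j : ℕ => G ^ j * (U - 1)⁻¹ʳ * R ^ j) W)
    (hWR : W * R = Ghat * W) :
    W * A1 * (G * Ghat - 1) = Ghat := by
  have hA1 : A1 = R * (1 - U) := by
    rw [hR, Ring.inverse_mul_cancel_right _ _ (IsUnit.sub_iff.mp hU)]
  have stein : W = (U - 1)⁻¹ʳ + G * W * R := eq_add_mul_mul_of_hasSum hW
  have factored : (1 - G * Ghat) * W = (U - 1)⁻¹ʳ :=
    one_sub_mul_mul_eq_of_eq_add_mul_mul_s1 stein hWR
  have left_inv : W * (U - 1) * (1 - G * Ghat) = 1 :=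
    mul_mul_eq_one_of_mul_eq_inverse hU factored
  calc W * A1 * (G * Ghat - 1)
      = W * R * (U - 1) * (1 - G * Ghat) := by rw [hA1]; noncomm_ring
    _ = Ghat * (W * (U - 1) * (1 - G * Ghat)) := by simp only [hWR, mul_assoc]
    _ = Ghat := by rw [left_inv, mul_one]

/-- Lemma 2.3: if `U - I` is invertible, `R = A₁ (I - U)⁻¹`, the series
`W = ∑_{j≥0} G^j (U - I)⁻¹ R^j` converges and `W R = Ĝ W`, then
`W A₁ (G Ĝ - I) = Ĝ`. -/
theorem poisson_qbd_W_A1 {m : ℕ}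
    (A1 G Ghat R U W : Matrix (Fin m) (Fin m) ℝ)
    (hU : IsUnit (U - 1))
    (hR : R = A1 * (1 - U)⁻¹)
    (hW : HasSum (fun j : ℕ => G ^ j * (U - 1)⁻¹ * R ^ j) W)
    (hWR : W * R = Ghat * W) :
    W * A1 * (G * Ghat - 1) = Ghat := by
  simp only [nonsing_inv_eq_ringInverse] at hR hW
  exact poisson_qbd_W_A1_general hU hR hW hWR
end

section
/- Let $A_1,G,Y,M,W$ be $m\times m$ real matrices such that $M$ and $W$ are invertible and $W(A_1GM-Y)=M$. Then the $2m\times 2m$ block matrix $\Gamma=\begin{bmatrix}I& M\\ A_1G& Y\end{bmatrix}$ is invertible and $\Gamma\begin{bmatrix}W\\ -M^{-1}W\end{bmatrix}=\begin{bmatrix}0\\ I\end{bmatrix}$, i.e. the last $m$ columns of $\Gamma^{-1}$ are $\begin{bmatrix}W\\ -M^{-1}W\end{bmatrix}$. -/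
open Matrix

/-! Block elimination factors `[[1, B], [C, D]]` as `[[1, 0], [C, 1]] * [[1, B], [0, S]]`, where
`S = D - C * B` is the Schur complement of the identity block, so the matrix is invertible as soon
as `S` is, and the last block column of its inverse is `[-(B * S⁻¹); S⁻¹]`. For `B = M` and `D = Y`,
the relation `W * (C * M - Y) = M` says that `S = -(W⁻¹ * M)`, so that `S⁻¹ = -(M⁻¹ * W)` and
`-(M * S⁻¹) = W`. -/

section SchurComplement

variable {l m n p R : Type*} [Fintype m] [DecidableEq m] [Ring R]

theorem fromBlocks_one₁₁_mul_fromRows [Fintype n] (B : Matrix m n R) (C : Matrix l m R)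
    (D : Matrix l n R) (T : Matrix n p R) :
    fromBlocks 1 B C D * fromRows (-(B * T)) T = fromRows 0 ((D - C * B) * T) := by
  rw [fromBlocks_mul_fromRows, Matrix.one_mul, neg_add_cancel, Matrix.mul_neg, Matrix.sub_mul,
    Matrix.mul_assoc, neg_add_eq_sub]

theorem fromBlocks_one₁₁_eq_lower_mul_upper [Fintype l] [DecidableEq l] (B : Matrix m n R)
    (C : Matrix l m R) (D : Matrix l n R) :
    fromBlocks 1 B C D =
      (fromBlocks 1 0 C 1 : Matrix (m ⊕ l) (m ⊕ l) R) * fromBlocks 1 B 0 (D - C * B) := by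
  simp [fromBlocks_multiply]

variable [Fintype n] [DecidableEq n]

theorem isUnit_fromBlocks_one₁₁_zero₁₂_one₂₂ (C : Matrix n m R) :
    IsUnit (fromBlocks 1 0 C 1 : Matrix (m ⊕ n) (m ⊕ n) R) :=
  isUnit_iff_exists.2 ⟨fromBlocks 1 0 (-C) 1,
    by simp [fromBlocks_multiply], by simp [fromBlocks_multiply]⟩

theorem isUnit_fromBlocks_one₁₁_zero₂₁ (B : Matrix m n R) {D : Matrix n n R} (hD : IsUnit D) :
    IsUnit (fromBlocks (1 : Matrix m m R) B 0 D) := by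
  obtain ⟨D, rfl⟩ := hD
  exact isUnit_iff_exists.2 ⟨fromBlocks 1 (-(B * D⁻¹.val)) 0 D⁻¹.val,
    by simp [fromBlocks_multiply], by simp [fromBlocks_multiply, Matrix.mul_assoc]⟩

theorem isUnit_fromBlocks_one₁₁ {B : Matrix m n R} {C : Matrix n m R} {D : Matrix n n R}
    (hS : IsUnit (D - C * B)) : IsUnit (fromBlocks 1 B C D) := by
  rw [fromBlocks_one₁₁_eq_lower_mul_upper]
  exact (isUnit_fromBlocks_one₁₁_zero₁₂_one₂₂ C).mul (isUnit_fromBlocks_one₁₁_zero₂₁ B hS)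

end SchurComplement

theorem poisson_qbd_resolvent_Gamma_general {n R : Type*} [Fintype n] [DecidableEq n] [Ring R]
    (C Y : Matrix n n R) (M W : (Matrix n n R)ˣ) (h : W.val * (C * M.val - Y) = M.val) :
    IsUnit (fromBlocks 1 M.val C Y) ∧
    fromBlocks 1 M.val C Y * fromRows W.val (-(M⁻¹ * W).val) =
      fromRows (0 : Matrix n n R) (1 : Matrix n n R) := by
  have schur_eq : Y - C * M.val = (-(W⁻¹ * M)).val := by
    rw [← neg_sub, (Units.eq_inv_mul_iff_mul_eq W).2 h, Units.val_neg, Units.val_mul]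
  have schur_mul : (Y - C * M.val) * -(M⁻¹ * W).val = 1 := by
    rw [schur_eq, ← Units.val_neg, ← Units.val_mul, neg_mul_neg, mul_assoc, mul_inv_cancel_left,
      inv_mul_cancel, Units.val_one]
  have neg_mul_eq : -(M.val * -(M⁻¹ * W).val) = W.val := by
    rw [mul_neg, neg_neg, ← Units.val_mul, mul_inv_cancel_left]
  refine ⟨isUnit_fromBlocks_one₁₁ (schur_eq ▸ Units.isUnit _), ?_⟩
  simpa only [neg_mul_eq, schur_mul] using
    fromBlocks_one₁₁_mul_fromRows M.val C Y (-(M⁻¹ * W).val)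

/-- The computational core of Theorem 3.5: if `W (A₁ G M - Y) = M` with `M, W`
invertible, then `Γ = [[I, M], [A₁ G, Y]]` is invertible and the last `m`
columns of `Γ⁻¹` are `[W; -M⁻¹ W]`. -/
theorem poisson_qbd_resolvent_Gamma {m : ℕ}
    (A1 G Y M W : Matrix (Fin m) (Fin m) ℝ)
    (hM : IsUnit M) (hW : IsUnit W)
    (h : W * (A1 * G * M - Y) = M) :
    IsUnit (Matrix.fromBlocks 1 M (A1 * G) Y) ∧
    Matrix.fromBlocks 1 M (A1 * G) Y * Matrix.fromRows W (-(M⁻¹ * W)) =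
      Matrix.fromRows (0 : Matrix (Fin m) (Fin m) ℝ) (1 : Matrix (Fin m) (Fin m) ℝ) := by
  obtain ⟨M, rfl⟩ := hM
  obtain ⟨W, rfl⟩ := hW
  simpa only [Units.val_mul, coe_units_inv] using
    poisson_qbd_resolvent_Gamma_general (A1 * G) Y M W h
end

section
/- Let $B,A_1,G,\widehat G,W,R$ be $m\times m$ real matrices with $W$ invertible, $WA_1(G\widehat G-I)=\widehat G$, and let $\pi_0\in\mathbb{R}^m$ satisfy $\pi_0^T(I-B-A_1G)=0$. Let $L$ be $m\times p$ and $V_1$ invertible $p\times p$ with $\widehat GL=LV_1$. Let $g_k\in\mathbb{R}^m$ ($k\ge 0$), $\sigma_1\in\mathbb{R}^m$ and $y^*\in\mathbb{R}^p$ be such that the series $\sum_{k=0}^{\infty}R^kg_k$ converges and $\sum_{k=0}^{\infty}R^kg_k= g_0-W^{-1}\widehat G\sigma_1-W^{-1}\widehat GLV_1^{-1}y^*$. Then for every $y\in\mathbb{R}^p$ the solvability condition $\pi_0^T\big((B-I)\widehat G+A_1\big)(\sigma_1+LV_1^{-1}y)+\pi_0^Tg_0=0$ holds if and only if $\pi_0^TW^{-1}Ly=\pi_0^T\sum_{k=0}^{\infty}R^kg_k+\pi_0^TW^{-1}Ly^*$.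 -/
open Matrix

/-!
Stationarity of `π₀` says `π₀ᵀ (B - I) = -π₀ᵀ A₁ G`, and `A₁ (G Ĝ - I) = W⁻¹ Ĝ`, so
`π₀ᵀ ((B - I) Ĝ + A₁) = -π₀ᵀ A₁ (G Ĝ - I) = -π₀ᵀ W⁻¹ Ĝ`. As `Ĝ L V₁⁻¹ = L`, the solvability
condition becomes `π₀ᵀ W⁻¹ L y = π₀ᵀ (g₀ - W⁻¹ Ĝ σ₁)`, and the assumed value of the series is
`∑ R^k g_k = g₀ - W⁻¹ Ĝ σ₁ - W⁻¹ L y*`.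
-/

section

variable {l n p K : Type*} [Fintype l] [Fintype p] [DecidableEq p]

theorem mul_mul_inv_eq_of_mul_eq_mul [CommRing K] {A : Matrix n l K} {L : Matrix l p K}
    {M : Matrix n p K} {V : Matrix p p K} (hV : IsUnit V) (h : A * L = M * V) :
    A * (L * V⁻¹) = M := by
  rw [← Matrix.mul_assoc, h,
    mul_nonsing_inv_cancel_right _ _ ((isUnit_iff_isUnit_det V).mp hV)]

variable [Fintype n] [DecidableEq n]

theorem vecMul_sub_one_mul_add_eq_neg [DecidableEq l] [Ring K] {B : Matrix n n K} {A : Matrix n l K}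
    {G : Matrix l n K} {π : n → K} (hπ : π ᵥ* (1 - B - A * G) = 0) (Ghat : Matrix n l K) :
    π ᵥ* ((B - 1) * Ghat + A) = -(π ᵥ* (A * (G * Ghat - 1))) := by
  have hsplit : (B - 1) * Ghat + A = -((1 - B - A * G) * Ghat) - A * (G * Ghat - 1) := by
    simp only [Matrix.sub_mul, Matrix.mul_sub, Matrix.mul_assoc, Matrix.one_mul, Matrix.mul_one]
    abel
  rw [hsplit, vecMul_sub, vecMul_neg, ← vecMul_vecMul, hπ, zero_vecMul, neg_zero, zero_sub]

variable [CommRing K] {B A G Ghat W : Matrix n n K} {L : Matrix n p K} {V : Matrix p p K}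
  {π : n → K}

theorem vecMul_sub_one_mul_add_eq_neg_vecMul_inv_mul (hW : IsUnit W)
    (hWA : W * A * (G * Ghat - 1) = Ghat) (hπ : π ᵥ* (1 - B - A * G) = 0) :
    π ᵥ* ((B - 1) * Ghat + A) = -(π ᵥ* (W⁻¹ * Ghat)) := by
  have hinv : W⁻¹ * Ghat = A * (G * Ghat - 1) := by
    rw [← nonsing_inv_mul_cancel_left W (A * (G * Ghat - 1)) ((isUnit_iff_isUnit_det W).mp hW),
      ← Matrix.mul_assoc W, hWA]
  rw [vecMul_sub_one_mul_add_eq_neg hπ, hinv]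

theorem dotProduct_sub_one_mul_add_mulVec_add_eq_zero_iff (hW : IsUnit W)
    (hWA : W * A * (G * Ghat - 1) = Ghat) (hπ : π ᵥ* (1 - B - A * G) = 0)
    (hV : IsUnit V) (hGL : Ghat * L = L * V) (γ σ : n → K) (y : p → K) :
    π ⬝ᵥ ((B - 1) * Ghat + A) *ᵥ (σ + (L * V⁻¹) *ᵥ y) + π ⬝ᵥ γ = 0 ↔
      π ⬝ᵥ (W⁻¹ * L) *ᵥ y = π ⬝ᵥ (γ - (W⁻¹ * Ghat) *ᵥ σ) := by
  have hcoeff : π ⬝ᵥ ((B - 1) * Ghat + A) *ᵥ (σ + (L * V⁻¹) *ᵥ y) =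
      -(π ⬝ᵥ (W⁻¹ * Ghat) *ᵥ σ + π ⬝ᵥ (W⁻¹ * L) *ᵥ y) := by
    rw [dotProduct_mulVec, vecMul_sub_one_mul_add_eq_neg_vecMul_inv_mul hW hWA hπ, neg_dotProduct,
      ← dotProduct_mulVec, mulVec_add, mulVec_mulVec, Matrix.mul_assoc W⁻¹,
      mul_mul_inv_eq_of_mul_eq_mul hV hGL, dotProduct_add]
  rw [hcoeff, neg_add_eq_zero, dotProduct_sub, eq_sub_iff_add_eq']

theorem poisson_qbd_solvability_constraint_general [TopologicalSpace K] [T2Space K]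
    {R : Matrix n n K} (hW : IsUnit W) (hWA : W * A * (G * Ghat - 1) = Ghat)
    (hπ : π ᵥ* (1 - B - A * G) = 0) (hV : IsUnit V) (hGL : Ghat * L = L * V)
    {g : ℕ → n → K} {σ : n → K} {ystar : p → K}
    (hg : HasSum (fun k ↦ R ^ k *ᵥ g k)
      (g 0 - (W⁻¹ * Ghat) *ᵥ σ - (W⁻¹ * Ghat * L * V⁻¹) *ᵥ ystar)) (y : p → K) :
    π ⬝ᵥ ((B - 1) * Ghat + A) *ᵥ (σ + (L * V⁻¹) *ᵥ y) + π ⬝ᵥ g 0 = 0 ↔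
      π ⬝ᵥ (W⁻¹ * L) *ᵥ y = π ⬝ᵥ ∑' k, R ^ k *ᵥ g k + π ⬝ᵥ (W⁻¹ * L) *ᵥ ystar := by
  have hWGL : W⁻¹ * Ghat * L * V⁻¹ = W⁻¹ * L := by
    rw [Matrix.mul_assoc, Matrix.mul_assoc, mul_mul_inv_eq_of_mul_eq_mul hV hGL]
  rw [dotProduct_sub_one_mul_add_mulVec_add_eq_zero_iff hW hWA hπ hV hGL, hg.tsum_eq, hWGL,
    ← dotProduct_add, sub_add_cancel]

end

/-- The solvability constraint of Theorem 4.3 (positive recurrent case): the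
condition `π₀ᵀ ((B - I) Ĝ + A₁)(σ₁ + L V₁⁻¹ y) + π₀ᵀ g₀ = 0` holds iff
`π₀ᵀ W⁻¹ L y = π₀ᵀ ∑_{k≥0} R^k g_k + π₀ᵀ W⁻¹ L y*`. -/
theorem poisson_qbd_solvability_constraint {m p : ℕ}
    (B A1 G Ghat W R : Matrix (Fin m) (Fin m) ℝ)
    (hW : IsUnit W) (hWA : W * A1 * (G * Ghat - 1) = Ghat)
    (π0 : Fin m → ℝ) (hπ : π0 ᵥ* (1 - B - A1 * G) = 0)
    (L : Matrix (Fin m) (Fin p) ℝ) (V1 : Matrix (Fin p) (Fin p) ℝ)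
    (hV1 : IsUnit V1) (hGL : Ghat * L = L * V1)
    (g : ℕ → Fin m → ℝ) (σ1 : Fin m → ℝ) (ystar : Fin p → ℝ)
    (s : Fin m → ℝ) (hs : HasSum (fun k : ℕ => (R ^ k).mulVec (g k)) s)
    (hrel : s = g 0 - (W⁻¹ * Ghat).mulVec σ1 - (W⁻¹ * Ghat * L * V1⁻¹).mulVec ystar) :
    ∀ y : Fin p → ℝ,
      (π0 ⬝ᵥ ((B - 1) * Ghat + A1).mulVec (σ1 + (L * V1⁻¹).mulVec y) + π0 ⬝ᵥ g 0 = 0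
      ↔ π0 ⬝ᵥ (W⁻¹ * L).mulVec y = π0 ⬝ᵥ s + π0 ⬝ᵥ (W⁻¹ * L).mulVec ystar) := by
  intro y
  rw [← hs.tsum_eq]
  exact poisson_qbd_solvability_constraint_general hW hWA hπ hV1 hGL (hrel ▸ hs) y
end

section
/- Let $A_{-1},A_0,A_1,Q$ be $m\times m$ real matrices with $(A_{-1}+A_0-I+A_1)Q=0$, and set $\widetilde A_{-1}=A_{-1}(I-Q)$, $\widetilde A_0=A_0+A_1Q$, $\widetilde A_1=A_1$. Then for every scalar $\lambda$, $\big(A_{-1}+(A_0-I)\lambda+A_1\lambda^2\big)\big((1-\lambda)I-Q\big)=(1-\lambda)\big(\widetilde A_{-1}+(\widetilde A_0-I)\lambda+\widetilde A_1\lambda^2\big)$. -/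
open Matrix

/-!
Write `η(t) = a + t b + t² c`. As `η(t) - η(1)` is divisible by `1 - t`, the hypothesis
`η(1) q = 0` makes `1 - t` a factor of `η(t) q`, and hence of `η(t) ((1 - t) - q)`. The cofactor is
`a + (b + c) q + t (b + c q) + t² c`, whose constant term is `a (1 - q)` by the hypothesis again.
-/

section RightShift

variable {R A : Type*} [CommRing R]

lemma quadratic_eq_eval_one_sub_smul [AddCommGroup A] [Module R A] (a b c : A) (t : R) :
    a + t • b + t ^ 2 • c = a + b + c - (1 - t) • (b + (1 + t) • c) := by
  module

lemma quadratic_mul_eq_neg_smul [NonUnitalNonAssocRing A] [Module R A] [IsScalarTower R A A]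
    {a b c q : A} (hq : (a + b + c) * q = 0) (t : R) :
    (a + t • b + t ^ 2 • c) * q = -((1 - t) • ((b + (1 + t) • c) * q)) := by
  rw [quadratic_eq_eval_one_sub_smul, sub_mul, hq, zero_sub, smul_mul_assoc]

theorem poisson_qbd_right_shift_polynomial_general [NonAssocRing A] [Module R A]
    [IsScalarTower R A A] [SMulCommClass R A A] {a b c q : A}
    (hq : (a + b + c) * q = 0) (t : R) :
    (a + t • b + t ^ 2 • c) * ((1 - t) • (1 : A) - q)
      = (1 - t) • (a * (1 - q) + t • (b + c * q) + t ^ 2 • c) := by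
  have constant_term : a * (1 - q) = a + (b + c) * q := by
    rw [add_assoc, add_mul] at hq
    rw [mul_sub, mul_one, sub_eq_add_neg, neg_eq_of_add_eq_zero_right hq]
  calc (a + t • b + t ^ 2 • c) * ((1 - t) • (1 : A) - q)
      = (1 - t) • (a + t • b + t ^ 2 • c) - (a + t • b + t ^ 2 • c) * q := by
        rw [mul_sub, mul_smul_comm, mul_one]
    _ = (1 - t) • (a + t • b + t ^ 2 • c + (b + (1 + t) • c) * q) := by
        rw [quadratic_mul_eq_neg_smul hq, sub_neg_eq_add, ← smul_add]
    _ = (1 - t) • (a + (b + c) * q + t • (b + c * q) + t ^ 2 • c) := by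
        simp only [add_mul, smul_mul_assoc]
        module
    _ = (1 - t) • (a * (1 - q) + t • (b + c * q) + t ^ 2 • c) := by
        rw [constant_term]

end RightShift

/-- The polynomial identity underlying the right shift technique:
`η(λ)((1-λ)I - Q) = (1-λ) η̃(λ)`, where `η(λ) = A₋₁ + (A₀ - I)λ + A₁λ²`,
`η̃(λ) = Ã₋₁ + (Ã₀ - I)λ + Ã₁λ²`, `Ã₋₁ = A₋₁(I - Q)`, `Ã₀ = A₀ + A₁ Q`,
`Ã₁ = A₁`, given `(A₋₁ + A₀ - I + A₁) Q = 0`. -/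
theorem poisson_qbd_right_shift_polynomial {m : ℕ}
    (Am1 A0 A1 Q : Matrix (Fin m) (Fin m) ℝ)
    (hQ : (Am1 + A0 - 1 + A1) * Q = 0) :
    ∀ lam : ℝ,
      (Am1 + lam • (A0 - 1) + lam ^ 2 • A1) *
          ((1 - lam) • (1 : Matrix (Fin m) (Fin m) ℝ) - Q)
        = (1 - lam) • (Am1 * (1 - Q) + lam • (A0 + A1 * Q - 1) + lam ^ 2 • A1) := by
  rw [add_sub_assoc] at hQ
  simpa only [sub_add_eq_add_sub] using poisson_qbd_right_shift_polynomial_general hQ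
end

section
/- Let $A_{-1},A_0,A_1,G,Q$ be $m\times m$ real matrices with $A_{-1}+(A_0-I)G+A_1G^2=0$, $GQ=Q$ and $Q^2=Q$. Then $\widetilde G=G-Q$ satisfies $\widetilde A_{-1}+(\widetilde A_0-I)\widetilde G+\widetilde A_1\widetilde G^2=0$, where $\widetilde A_{-1}=A_{-1}(I-Q)$, $\widetilde A_0=A_0+A_1Q$ and $\widetilde A_1=A_1$. -/
open Matrix

/-!
If `G Q = Q`, then `G̃ = G - Q = G (1 - Q)`, and since `G̃ + Q = G` also
`Q G̃ + G̃² = G G̃ = G² (1 - Q)`. Hence the shift multiplies the residual of the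
quadratic equation at `G` by `1 - Q` on the right.
-/

section Ring

variable {R : Type*} [Ring R]

theorem right_shift_residual_eq_mul_one_sub (C B A : R) {G Q : R} (hGQ : G * Q = Q) :
    C * (1 - Q) + (B + A * Q) * (G - Q) + A * (G - Q) ^ 2 =
      (C + B * G + A * G ^ 2) * (1 - Q) := by
  have hsub : G - Q = G * (1 - Q) := by rw [mul_one_sub, hGQ]
  have hquad : Q * (G - Q) + (G - Q) ^ 2 = G ^ 2 * (1 - Q) := by
    calc Q * (G - Q) + (G - Q) ^ 2
        = G * (G - Q) := by rw [sq, ← add_mul, add_sub_cancel]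
      _ = G ^ 2 * (1 - Q) := by rw [hsub, sq, mul_assoc]
  calc C * (1 - Q) + (B + A * Q) * (G - Q) + A * (G - Q) ^ 2
      = C * (1 - Q) + B * (G - Q) + A * (Q * (G - Q) + (G - Q) ^ 2) := by noncomm_ring
    _ = C * (1 - Q) + B * (G * (1 - Q)) + A * (G ^ 2 * (1 - Q)) := by rw [hquad, hsub]
    _ = (C + B * G + A * G ^ 2) * (1 - Q) := by simp only [add_mul, mul_assoc]

theorem poisson_qbd_right_shift_Gtilde_general (Am1 A0 A1 G Q : R)
    (hG : Am1 + (A0 - 1) * G + A1 * G ^ 2 = 0) (hGQ : G * Q = Q) :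
    Am1 * (1 - Q) + (A0 + A1 * Q - 1) * (G - Q) + A1 * (G - Q) ^ 2 = 0 := by
  rw [add_sub_right_comm, right_shift_residual_eq_mul_one_sub Am1 (A0 - 1) A1 hGQ, hG,
    zero_mul]

end Ring

/-- The algebraic core of the right shift theorem: if `G` solves
`A₋₁ + (A₀ - I)X + A₁X² = 0`, `G Q = Q` and `Q² = Q`, then `G̃ = G - Q` solves
the shifted equation `Ã₋₁ + (Ã₀ - I)X + Ã₁X² = 0` with `Ã₋₁ = A₋₁(I - Q)`,
`Ã₀ = A₀ + A₁ Q`, `Ã₁ = A₁`. -/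
theorem poisson_qbd_right_shift_Gtilde {m : ℕ}
    (Am1 A0 A1 G Q : Matrix (Fin m) (Fin m) ℝ)
    (hG : Am1 + (A0 - 1) * G + A1 * G ^ 2 = 0)
    (hGQ : G * Q = Q) (hQ2 : Q ^ 2 = Q) :
    Am1 * (1 - Q) + (A0 + A1 * Q - 1) * (G - Q) + A1 * (G - Q) ^ 2 = 0 :=
  poisson_qbd_right_shift_Gtilde_general Am1 A0 A1 G Q hG hGQ
end
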